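/- Let 2 ≤ B < N ≤ d + 1 with B dividing N, and let B_1, …, B_{N/B} be pairwise disjoint size-B subsets of Fin N whose union is Fin N. Then the set of unit-norm minimizers of the partition mini-batch loss Σ_{k=1}^{N/B} L_{B_k}(u,v) is different from the set of unit-norm minimizers of the full-batch loss L(u,v): there exists a pair (u,v) with ‖u i‖ = ‖v i‖ = 1 for all i that minimizes Σ_k L_{B_k}(u,v) over all unit-norm pairs but does not minimize L(u,v); in particular one can choose such a minimizer in which the restriction of u to each batch B_k forms a simplex ETF of B points while the whole family (u i) does not form a simplex ETF of N points. -/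

import Mathlib

open scoped RealInnerProductSpace BigOperators
open Finset

noncomputable def fullLoss {N d : ℕ} (u v : Fin N → EuclideanSpace ℝ (Fin d)) : ℝ :=
  -(1/(N:ℝ)) * ∑ i, Real.log (Real.exp ⟪u i, v i⟫ / ∑ j, Real.exp ⟪u i, v j⟫)
  - (1/(N:ℝ)) * ∑ i, Real.log (Real.exp ⟪v i, u i⟫ / ∑ j, Real.exp ⟪v i, u j⟫)

noncomputable def batchLoss {N d : ℕ} (S : Finset (Fin N))
    (u v : Fin N → EuclideanSpace ℝ (Fin d)) : ℝ :=
  -(1/(S.card : ℝ)) * ∑ i ∈ S, Real.log (Real.exp ⟪u i, v i⟫ / ∑ j ∈ S, Real.exp ⟪u i, v j⟫)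
  - (1/(S.card : ℝ)) * ∑ i ∈ S, Real.log (Real.exp ⟪v i, u i⟫ / ∑ j ∈ S, Real.exp ⟪v i, u j⟫)

def IsSimplexETF {N d : ℕ} (u : Fin N → EuclideanSpace ℝ (Fin d)) : Prop :=
  (∀ i, ‖u i‖ = 1) ∧ ∀ i j, i ≠ j → ⟪u i, u j⟫ = -(1/((N:ℝ) - 1))

def IsSimplexCrossPolytope {N d : ℕ} (u : Fin N → EuclideanSpace ℝ (Fin d)) : Prop :=
  (∀ i, ‖u i‖ = 1) ∧ ∀ i, ∃ j, ⟪u i, u j⟫ = -1 ∧ (∀ j', ⟪u i, u j'⟫ = -1 → j' = j) ∧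
    ∀ k, k ≠ i → k ≠ j → ⟪u i, u k⟫ = 0

def SymmAntipodal {N d : ℕ} (u v : Fin N → EuclideanSpace ℝ (Fin d)) : Prop :=
  u = v ∧ ∀ i, ∃ j, u j = -(u i)

noncomputable def avgBatchLoss {N d : ℕ} (B : ℕ)
    (u v : Fin N → EuclideanSpace ℝ (Fin d)) : ℝ :=
  (1/(N.choose B : ℝ)) * ∑ S ∈ Finset.powersetCard B (Finset.univ : Finset (Fin N)), batchLoss S u v

/-!
On a batch of `n ≥ 2` unit-norm pairs, linearize each row `log ∑ⱼ exp ⟪uᵢ, vⱼ⟫` at the score row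
of a simplex ETF: by convexity of log-sum-exp the tangent plane lies below it. Summed over the
rows, the linear term is a nonnegative multiple of `⟪∑ u, ∑ v⟫ - n ∑ ⟪uᵢ, vᵢ⟫ + n²`, which
Cauchy–Schwarz shows to be nonnegative. Hence simplex ETFs attain the minimum of the batch loss,
and by strict convexity a pair `(u, u)` attains it only if `u` is a simplex ETF. Placing a simplex
ETF on each batch independently therefore minimizes every batch loss. The full-batch loss is the
loss of the single batch `univ`, whose minimum is attained because `N ≤ d + 1`; but a family that
is a simplex ETF on a smaller batch has inner products too negative for a simplex ETF of `N`
points.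
-/

section LogSumExp

variable {ι : Type*} {S : Finset ι}

lemma sum_exp_pos (hS : S.Nonempty) (x : ι → ℝ) : 0 < ∑ j ∈ S, Real.exp (x j) :=
  sum_pos (fun j _ => Real.exp_pos (x j)) hS

lemma sum_softmax_eq_one (hS : S.Nonempty) (y : ι → ℝ) :
    ∑ j ∈ S, Real.exp (y j) / ∑ k ∈ S, Real.exp (y k) = 1 := by
  rw [← sum_div, div_self (sum_exp_pos hS y).ne']

lemma sum_softmax_mul_exp_sub (x y : ι → ℝ) :
    ∑ j ∈ S, Real.exp (y j) / (∑ k ∈ S, Real.exp (y k)) * Real.exp (x j - y j)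
      = (∑ j ∈ S, Real.exp (x j)) / ∑ k ∈ S, Real.exp (y k) := by
  rw [sum_div]
  refine sum_congr rfl fun j _ => ?_
  rw [div_mul_eq_mul_div, ← Real.exp_add, add_sub_cancel]

lemma sum_softmax_mul_sub_le_log_div (hS : S.Nonempty) (x y : ι → ℝ) :
    ∑ j ∈ S, Real.exp (y j) / (∑ k ∈ S, Real.exp (y k)) * (x j - y j)
      ≤ Real.log ((∑ j ∈ S, Real.exp (x j)) / ∑ k ∈ S, Real.exp (y k)) := by
  rw [Real.le_log_iff_exp_le (div_pos (sum_exp_pos hS x) (sum_exp_pos hS y)),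
    ← sum_softmax_mul_exp_sub]
  exact convexOn_exp.map_sum_le (fun j _ => (div_pos (Real.exp_pos _) (sum_exp_pos hS y)).le)
    (sum_softmax_eq_one hS y) (fun j _ => Set.mem_univ _)

lemma sub_eq_sub_of_log_div_le_sum_softmax_mul_sub {x y : ι → ℝ}
    (hle : Real.log ((∑ j ∈ S, Real.exp (x j)) / ∑ k ∈ S, Real.exp (y k))
      ≤ ∑ j ∈ S, Real.exp (y j) / (∑ k ∈ S, Real.exp (y k)) * (x j - y j))
    {i j : ι} (hi : i ∈ S) (hj : j ∈ S) : x i - y i = x j - y j := by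
  rw [Real.log_le_iff_le_exp (div_pos (sum_exp_pos ⟨i, hi⟩ x) (sum_exp_pos ⟨i, hi⟩ y)),
    ← sum_softmax_mul_exp_sub] at hle
  exact strictConvexOn_exp.eq_of_le_map_sum
    (fun j _ => div_pos (Real.exp_pos _) (sum_exp_pos ⟨i, hi⟩ y))
    (sum_softmax_eq_one ⟨i, hi⟩ y) (fun j _ => Set.mem_univ _) hle hi hj

end LogSumExp

/-- The row `j ↦ ⟪uᵢ, uⱼ⟫ - ⟪uᵢ, uᵢ⟫` of scores, relative to the positive one, of a simplex ETF of
`n` points `u`: `-1/(n-1) - 1 = -n/(n-1)` off the diagonal. -/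
noncomputable def simplexScore {ι : Type*} [DecidableEq ι] (n : ℕ) (i j : ι) : ℝ :=
  if j = i then 0 else -(n / (n - 1))

/-- The softmax denominator `∑ⱼ exp (simplexScore n i j)` of a row of a simplex ETF of `n`
points. -/
noncomputable def simplexPartition (n : ℕ) : ℝ :=
  1 + (n - 1) * Real.exp (-(n / (n - 1)))

/-- The affine function of a row `x` of scores that is tangent to the row loss
`log ∑ⱼ exp (x j) - x i` at the row of a simplex ETF. The sum over `j ≠ i` of the increments
`x j - x i + n/(n-1)`, where `n = #S`, is written as a sum over all of `S`. -/
noncomputable def simplexTangent {ι : Type*} (S : Finset ι) (x : ι → ℝ) (i : ι) : ℝ :=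
  Real.log (simplexPartition #S) + Real.exp (-(#S / (#S - 1))) / simplexPartition #S
    * (∑ j ∈ S, x j - #S * x i + #S)

section SimplexScore

variable {ι : Type*} {S : Finset ι} {i : ι}

lemma simplexPartition_pos {n : ℕ} (hn : 1 ≤ n) : 0 < simplexPartition n := by
  have : (0 : ℝ) ≤ n - 1 := sub_nonneg.2 (by exact_mod_cast hn)
  unfold simplexPartition
  positivity

lemma sum_simplexScore_comp [DecidableEq ι] (hi : i ∈ S) (F : ι → ℝ → ℝ) :
    ∑ j ∈ S, F j (simplexScore #S i j)
      = F i 0 + ∑ j ∈ S.erase i, F j (-(#S / (#S - 1))) := by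
  rw [← add_sum_erase _ _ hi]
  congr 1
  · simp [simplexScore]
  · exact sum_congr rfl fun j hj => by rw [simplexScore, if_neg (ne_of_mem_erase hj)]

lemma sum_exp_simplexScore [DecidableEq ι] (hi : i ∈ S) :
    ∑ j ∈ S, Real.exp (simplexScore #S i j) = simplexPartition #S := by
  rw [sum_simplexScore_comp hi fun _ => Real.exp, sum_const, nsmul_eq_mul,
    cast_card_erase_of_mem hi, Real.exp_zero, simplexPartition]

lemma sum_exp_simplexScore_mul_sub [DecidableEq ι] (hS : 2 ≤ #S) (hi : i ∈ S) (x : ι → ℝ) :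
    ∑ j ∈ S, Real.exp (simplexScore #S i j) * (x j - simplexScore #S i j)
      = simplexPartition #S * x i
        + Real.exp (-(#S / (#S - 1))) * (∑ j ∈ S, x j - #S * x i + #S) := by
  have hn : (#S : ℝ) - 1 ≠ 0 := by
    have : (2 : ℝ) ≤ #S := by exact_mod_cast hS
    linarith
  rw [sum_simplexScore_comp hi fun j s => Real.exp s * (x j - s), ← mul_sum, sum_sub_distrib,
    sum_const, nsmul_eq_mul, cast_card_erase_of_mem hi, ← add_sum_erase _ _ hi, Real.exp_zero,
    simplexPartition, mul_neg, mul_div_cancel₀ _ hn]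
  ring

lemma sum_softmax_simplexScore_mul_sub [DecidableEq ι] (hS : 2 ≤ #S) (hi : i ∈ S) (x : ι → ℝ) :
    ∑ j ∈ S, Real.exp (simplexScore #S i j) / (∑ k ∈ S, Real.exp (simplexScore #S i k))
        * (x j - simplexScore #S i j)
      = x i + simplexTangent S x i - Real.log (simplexPartition #S) := by
  have hZ : simplexPartition #S ≠ 0 := (simplexPartition_pos (by lia)).ne'
  simp only [div_mul_eq_mul_div]
  rw [← sum_div, sum_exp_simplexScore_mul_sub hS hi, sum_exp_simplexScore hi,
    simplexTangent]
  field_simp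
  ring

lemma log_sum_exp_div_sum_exp_simplexScore [DecidableEq ι] (hi : i ∈ S) (x : ι → ℝ) :
    Real.log ((∑ j ∈ S, Real.exp (x j)) / ∑ k ∈ S, Real.exp (simplexScore #S i k))
      = Real.log (∑ j ∈ S, Real.exp (x j)) - Real.log (simplexPartition #S) := by
  rw [sum_exp_simplexScore hi, Real.log_div (sum_exp_pos ⟨i, hi⟩ _).ne'
    (simplexPartition_pos (card_pos.2 ⟨i, hi⟩)).ne']

lemma simplexTangent_le (hS : 2 ≤ #S) (hi : i ∈ S) (x : ι → ℝ) :
    simplexTangent S x i ≤ Real.log (∑ j ∈ S, Real.exp (x j)) - x i := by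
  classical
  have := sum_softmax_mul_sub_le_log_div ⟨i, hi⟩ x (simplexScore #S i)
  rw [sum_softmax_simplexScore_mul_sub hS hi, log_sum_exp_div_sum_exp_simplexScore hi] at this
  linarith

lemma eq_add_simplexScore_of_le_simplexTangent [DecidableEq ι] (hS : 2 ≤ #S) (hi : i ∈ S)
    {x : ι → ℝ} (hle : Real.log (∑ j ∈ S, Real.exp (x j)) - x i ≤ simplexTangent S x i)
    {j : ι} (hj : j ∈ S) : x j = x i + simplexScore #S i j := by
  have sub_eq : x j - simplexScore #S i j = x i - simplexScore #S i i := by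
    refine sub_eq_sub_of_log_div_le_sum_softmax_mul_sub ?_ hj hi
    rw [sum_softmax_simplexScore_mul_sub hS hi, log_sum_exp_div_sum_exp_simplexScore hi]
    linarith
  have score_self : simplexScore #S i i = 0 := if_pos rfl
  linarith

lemma log_sum_exp_sub_eq_of_eq_add_simplexScore [DecidableEq ι] (hi : i ∈ S) {x : ι → ℝ} {a : ℝ}
    (hx : ∀ j ∈ S, x j = a + simplexScore #S i j) :
    Real.log (∑ j ∈ S, Real.exp (x j)) - a = Real.log (simplexPartition #S) := by
  have factor : ∑ j ∈ S, Real.exp (x j) = Real.exp a * simplexPartition #S := by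
    rw [← sum_exp_simplexScore hi, mul_sum]
    exact sum_congr rfl fun j hj => by rw [hx j hj, Real.exp_add]
  rw [factor, Real.log_mul (Real.exp_pos a).ne' (simplexPartition_pos (card_pos.2 ⟨i, hi⟩)).ne',
    Real.log_exp, add_sub_cancel_left]

end SimplexScore

/-- `u` restricted to `S` is a simplex ETF of `#S` points; `IsSimplexETF` is the case `S = univ`. -/
def IsSimplexETFOn {ι E : Type*} [NormedAddCommGroup E] [InnerProductSpace ℝ E]
    (S : Finset ι) (u : ι → E) : Prop :=
  (∀ i ∈ S, ‖u i‖ = 1) ∧ ∀ i ∈ S, ∀ j ∈ S, i ≠ j → ⟪u i, u j⟫ = -(1 / ((#S : ℝ) - 1))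

/-- One direction of the contrastive loss, with anchors `u` and candidates `v`, summed (not
averaged) over the anchors in `S`. -/
noncomputable def infoNCE {ι E : Type*} [NormedAddCommGroup E] [InnerProductSpace ℝ E]
    (S : Finset ι) (u v : ι → E) : ℝ :=
  ∑ i ∈ S, (Real.log (∑ j ∈ S, Real.exp ⟪u i, v j⟫) - ⟪u i, v i⟫)

section InfoNCE

variable {ι E : Type*} [NormedAddCommGroup E] [InnerProductSpace ℝ E] {S : Finset ι} {u v : ι → E}

lemma isSimplexETFOn_iff_inner_eq [DecidableEq ι] (hS : 2 ≤ #S) :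
    IsSimplexETFOn S u ↔ ∀ i ∈ S, ∀ j ∈ S, ⟪u i, u j⟫ = 1 + simplexScore #S i j := by
  have offDiag : -(1 / ((#S : ℝ) - 1)) = 1 + -(#S / (#S - 1)) := by
    have : (2 : ℝ) ≤ #S := by exact_mod_cast hS
    have : (#S : ℝ) - 1 ≠ 0 := by linarith
    field_simp
    ring
  have norm_one_iff (x : E) : ‖x‖ = 1 ↔ ⟪x, x⟫ = 1 := by
    rw [real_inner_self_eq_norm_sq, pow_eq_one_iff_of_nonneg (norm_nonneg x) two_ne_zero]
  simp only [IsSimplexETFOn, norm_one_iff, offDiag, simplexScore]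
  constructor
  · rintro ⟨hdiag, hoff⟩ i hi j hj
    rcases eq_or_ne j i with rfl | hji
    · rw [if_pos rfl, add_zero, hdiag j hj]
    · rw [if_neg hji, hoff i hi j hj hji.symm]
  · intro h
    exact ⟨fun i hi => by rw [h i hi i hi, if_pos rfl, add_zero],
      fun i hi j hj hij => by rw [h i hi j hj, if_neg hij.symm]⟩

lemma card_mul_sum_inner_le (hu : ∀ i ∈ S, ‖u i‖ = 1) (hv : ∀ i ∈ S, ‖v i‖ = 1) :
    #S * ∑ i ∈ S, ⟪u i, v i⟫ ≤ ⟪∑ i ∈ S, u i, ∑ i ∈ S, v i⟫ + (#S : ℝ) ^ 2 := by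
  have cauchy_schwarz : ‖∑ i ∈ S, (u i - v i)‖ ^ 2 ≤ #S * ∑ i ∈ S, ‖u i - v i‖ ^ 2 :=
    (pow_le_pow_left₀ (norm_nonneg _) (norm_sum_le _ _) 2).trans sq_sum_le_card_mul_sum_sq
  have sum_norm_sq : ∑ i ∈ S, ‖u i - v i‖ ^ 2 = 2 * #S - 2 * ∑ i ∈ S, ⟪u i, v i⟫ := by
    calc ∑ i ∈ S, ‖u i - v i‖ ^ 2
        = ∑ i ∈ S, (2 - 2 * ⟪u i, v i⟫) :=
          sum_congr rfl fun i hi => by rw [norm_sub_sq_real, hu i hi, hv i hi]; ring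
      _ = 2 * #S - 2 * ∑ i ∈ S, ⟪u i, v i⟫ := by
          rw [sum_sub_distrib, sum_const, nsmul_eq_mul, mul_sum, mul_comm]
  rw [sum_norm_sq, sum_sub_distrib, norm_sub_sq_real] at cauchy_schwarz
  linarith [sq_nonneg ‖∑ i ∈ S, u i‖, sq_nonneg ‖∑ i ∈ S, v i‖]

lemma card_mul_log_le_sum_simplexTangent (hS : 2 ≤ #S)
    (hu : ∀ i ∈ S, ‖u i‖ = 1) (hv : ∀ i ∈ S, ‖v i‖ = 1) :
    #S * Real.log (simplexPartition #S)
      ≤ ∑ i ∈ S, simplexTangent S (fun j => ⟪u i, v j⟫) i := by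
  have slope_nonneg : 0 ≤ Real.exp (-(#S / (#S - 1))) / simplexPartition #S :=
    div_nonneg (Real.exp_pos _).le (simplexPartition_pos (by lia)).le
  have sum_linear : ∑ i ∈ S, (∑ j ∈ S, ⟪u i, v j⟫ - #S * ⟪u i, v i⟫ + #S)
      = ⟪∑ i ∈ S, u i, ∑ i ∈ S, v i⟫ - #S * ∑ i ∈ S, ⟪u i, v i⟫ + (#S : ℝ) ^ 2 := by
    simp only [← inner_sum, sum_add_distrib, sum_sub_distrib, ← sum_inner, ← mul_sum, sum_const,
      nsmul_eq_mul, sq]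
  simp only [simplexTangent]
  rw [sum_add_distrib, ← mul_sum, sum_linear, sum_const, nsmul_eq_mul]
  exact le_add_of_nonneg_right
    (mul_nonneg slope_nonneg (by linarith [card_mul_sum_inner_le hu hv]))

lemma card_mul_log_le_infoNCE (hS : 2 ≤ #S)
    (hu : ∀ i ∈ S, ‖u i‖ = 1) (hv : ∀ i ∈ S, ‖v i‖ = 1) :
    #S * Real.log (simplexPartition #S) ≤ infoNCE S u v :=
  (card_mul_log_le_sum_simplexTangent hS hu hv).trans <|
    sum_le_sum fun i hi => simplexTangent_le hS hi fun j => ⟪u i, v j⟫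

lemma inner_eq_add_simplexScore_of_infoNCE_le [DecidableEq ι] (hS : 2 ≤ #S)
    (hu : ∀ i ∈ S, ‖u i‖ = 1) (hv : ∀ i ∈ S, ‖v i‖ = 1)
    (hle : infoNCE S u v ≤ #S * Real.log (simplexPartition #S))
    {i j : ι} (hi : i ∈ S) (hj : j ∈ S) : ⟪u i, v j⟫ = ⟪u i, v i⟫ + simplexScore #S i j := by
  have row_le := fun i (hi : i ∈ S) => simplexTangent_le hS hi fun j => ⟪u i, v j⟫
  have row_eq := (sum_eq_sum_iff_of_le row_le).1 <|
    (sum_le_sum row_le).antisymm (hle.trans (card_mul_log_le_sum_simplexTangent hS hu hv))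
  exact eq_add_simplexScore_of_le_simplexTangent hS hi (x := fun j => ⟪u i, v j⟫)
    (row_eq i hi).ge hj

lemma infoNCE_self_eq_iff (hS : 2 ≤ #S) (hu : ∀ i ∈ S, ‖u i‖ = 1) :
    infoNCE S u u = #S * Real.log (simplexPartition #S) ↔ IsSimplexETFOn S u := by
  classical
  have inner_self {i : ι} (hi : i ∈ S) : ⟪u i, u i⟫ = (1 : ℝ) :=
    inner_self_eq_one_of_norm_eq_one (hu i hi)
  rw [isSimplexETFOn_iff_inner_eq hS]
  constructor
  · intro heq i hi j hj
    rw [inner_eq_add_simplexScore_of_infoNCE_le hS hu hu heq.le hi hj, inner_self hi]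
  · intro hETF
    rw [infoNCE, ← nsmul_eq_mul, ← sum_const]
    refine sum_congr rfl fun i hi => ?_
    rw [inner_self hi]
    exact log_sum_exp_sub_eq_of_eq_add_simplexScore hi (hETF i hi)

end InfoNCE

section Loss

variable {N d : ℕ} {S : Finset (Fin N)} {u v z : Fin N → EuclideanSpace ℝ (Fin d)}

lemma batchLoss_eq_infoNCE (S : Finset (Fin N)) (u v : Fin N → EuclideanSpace ℝ (Fin d)) :
    batchLoss S u v = (infoNCE S u v + infoNCE S v u) / #S := by
  have sum_log (a b : Fin N → EuclideanSpace ℝ (Fin d)) :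
      ∑ i ∈ S, Real.log (Real.exp ⟪a i, b i⟫ / ∑ j ∈ S, Real.exp ⟪a i, b j⟫)
        = -infoNCE S a b := by
    rw [infoNCE, ← sum_neg_distrib]
    refine sum_congr rfl fun i hi => ?_
    rw [Real.log_div (Real.exp_pos _).ne' (sum_exp_pos ⟨i, hi⟩ _).ne',
      Real.log_exp, neg_sub]
  rw [batchLoss, sum_log, sum_log]
  ring

lemma fullLoss_eq_batchLoss_univ (u v : Fin N → EuclideanSpace ℝ (Fin d)) :
    fullLoss u v = batchLoss univ u v := by
  simp only [fullLoss, batchLoss, card_univ, Fintype.card_fin]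

lemma isSimplexETFOn_univ_iff : IsSimplexETFOn univ u ↔ IsSimplexETF u := by
  simp only [IsSimplexETFOn, IsSimplexETF, mem_univ, true_imp_iff, card_univ, Fintype.card_fin]

lemma two_mul_log_le_batchLoss (hS : 2 ≤ #S)
    (hu : ∀ i ∈ S, ‖u i‖ = 1) (hv : ∀ i ∈ S, ‖v i‖ = 1) :
    2 * Real.log (simplexPartition #S) ≤ batchLoss S u v := by
  have card_pos : (0 : ℝ) < #S := by exact_mod_cast (by lia : 0 < #S)
  rw [batchLoss_eq_infoNCE, le_div_iff₀ card_pos]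
  linarith [card_mul_log_le_infoNCE hS hu hv,
    card_mul_log_le_infoNCE hS hv hu]

lemma batchLoss_self_eq_iff (hS : 2 ≤ #S) (hu : ∀ i ∈ S, ‖u i‖ = 1) :
    batchLoss S u u = 2 * Real.log (simplexPartition #S) ↔ IsSimplexETFOn S u := by
  have card_ne : (#S : ℝ) ≠ 0 := by exact_mod_cast (by lia : #S ≠ 0)
  rw [batchLoss_eq_infoNCE, ← infoNCE_self_eq_iff hS hu, div_eq_iff card_ne]
  constructor <;> intro h <;> linarith

lemma IsSimplexETFOn.batchLoss_self_le (hz : IsSimplexETFOn S z) (hS : 2 ≤ #S)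
    (hu : ∀ i ∈ S, ‖u i‖ = 1) (hv : ∀ i ∈ S, ‖v i‖ = 1) :
    batchLoss S z z ≤ batchLoss S u v :=
  ((batchLoss_self_eq_iff hS hz.1).2 hz).trans_le
    (two_mul_log_le_batchLoss hS hu hv)

lemma IsSimplexETF.of_fullLoss_self_le (hz : IsSimplexETF z) (hN : 2 ≤ N) (hu : ∀ i, ‖u i‖ = 1)
    (hle : fullLoss u u ≤ fullLoss z z) : IsSimplexETF u := by
  have hcard : 2 ≤ #(univ : Finset (Fin N)) := by rwa [card_fin]
  rw [fullLoss_eq_batchLoss_univ, fullLoss_eq_batchLoss_univ,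
    (batchLoss_self_eq_iff hcard fun i _ => hz.1 i).2 (isSimplexETFOn_univ_iff.2 hz)] at hle
  exact isSimplexETFOn_univ_iff.1 <| (batchLoss_self_eq_iff hcard fun i _ => hu i).1 <|
    hle.antisymm (two_mul_log_le_batchLoss hcard (fun i _ => hu i) fun i _ => hu i)

lemma IsSimplexETFOn.not_isSimplexETF (h : IsSimplexETFOn S u) (hS : 2 ≤ #S) (hSN : #S < N) :
    ¬ IsSimplexETF u := by
  intro hfull
  obtain ⟨i, hi, j, hj, hij⟩ := one_lt_card.1 hS
  have heq : ((#S : ℝ) - 1)⁻¹ = ((N : ℝ) - 1)⁻¹ := by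
    simpa only [one_div, neg_inj] using (h.2 i hi j hj hij).symm.trans (hfull.2 i j hij)
  exact hSN.ne (by exact_mod_cast sub_left_injective (inv_injective heq))

end Loss

section Construction

variable {ι E : Type*} [NormedAddCommGroup E] [InnerProductSpace ℝ E]

lemma isSimplexETFOn_univ_coe_iff {S : Finset ι} {u : ι → E} :
    IsSimplexETFOn univ (fun i : S => u i) ↔ IsSimplexETFOn S u := by
  simp [IsSimplexETFOn]

/-- The deviations of a finite family from its mean. Centering an orthonormal family gives the
vertices of a regular simplex, in a space of one dimension less. -/
noncomputable def centered [Fintype ι] (e : ι → E) (i : ι) : E :=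
  e i - (Fintype.card ι : ℝ)⁻¹ • ∑ j, e j

lemma inner_sum_orthonormal [Fintype ι] {e : ι → E} (he : Orthonormal ℝ e) (i : ι) :
    ⟪e i, ∑ j, e j⟫ = (1 : ℝ) := by
  simpa only [one_smul] using he.inner_right_fintype (fun _ => 1) i

lemma inner_sum_centered [Fintype ι] {e : ι → E} (he : Orthonormal ℝ e) (i : ι) :
    ⟪∑ j, e j, centered e i⟫ = (0 : ℝ) := by
  have : Nonempty ι := ⟨i⟩
  have card_ne : (Fintype.card ι : ℝ) ≠ 0 := by exact_mod_cast Fintype.card_ne_zero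
  have inner_self : ⟪∑ j, e j, ∑ j, e j⟫ = (Fintype.card ι : ℝ) := by
    rw [sum_inner, sum_congr rfl fun i _ => inner_sum_orthonormal he i, sum_const, nsmul_one,
      card_univ]
  rw [centered, inner_sub_right, inner_smul_right, inner_self, real_inner_comm,
    inner_sum_orthonormal he, inv_mul_cancel₀ card_ne, sub_self]

lemma inner_centered_centered [Fintype ι] [DecidableEq ι] {e : ι → E}
    (he : Orthonormal ℝ e) (i j : ι) :
    ⟪centered e i, centered e j⟫ = (if i = j then 1 else 0) - (Fintype.card ι : ℝ)⁻¹ := by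
  nth_rw 1 [centered]
  rw [inner_sub_left, real_inner_smul_left, inner_sum_centered he, centered, inner_sub_right,
    inner_smul_right, inner_sum_orthonormal he, orthonormal_iff_ite.1 he]
  ring

lemma isSimplexETFOn_univ_of_inner_eq [Fintype ι] [DecidableEq ι] (hι : 2 ≤ Fintype.card ι)
    {w : ι → E} (hw : ∀ i j, ⟪w i, w j⟫ = (if i = j then 1 else 0) - (Fintype.card ι : ℝ)⁻¹) :
    IsSimplexETFOn univ fun i => √(Fintype.card ι / (Fintype.card ι - 1)) • w i := by
  have two_le : (2 : ℝ) ≤ Fintype.card ι := by exact_mod_cast hι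
  have sub_one_pos : 0 < (Fintype.card ι : ℝ) - 1 := by linarith
  rw [isSimplexETFOn_iff_inner_eq hι, card_univ]
  intro i _ j _
  rw [real_inner_smul_left, real_inner_smul_right, ← mul_assoc,
    Real.mul_self_sqrt (by positivity), hw, simplexScore]
  rcases eq_or_ne i j with rfl | hij
  · rw [if_pos rfl, if_pos rfl]
    field_simp
    ring
  · rw [if_neg hij, if_neg hij.symm]
    field_simp
    ring

lemma exists_isSimplexETFOn_univ [Fintype ι] {d : ℕ} (hι : 2 ≤ Fintype.card ι)
    (hd : Fintype.card ι ≤ d + 1) :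
    ∃ w : ι → EuclideanSpace ℝ (Fin d), IsSimplexETFOn univ w := by
  classical
  have : Nonempty ι := Fintype.card_pos_iff.1 (by lia)
  obtain ⟨f⟩ : Nonempty (ι ↪ Fin (d + 1)) := Function.Embedding.nonempty_of_card_le (by simpa)
  let e : ι → EuclideanSpace ℝ (Fin (d + 1)) := EuclideanSpace.basisFun (Fin (d + 1)) ℝ ∘ f
  have he : Orthonormal ℝ e :=
    (EuclideanSpace.basisFun (Fin (d + 1)) ℝ).orthonormal.comp f f.injective
  have sum_ne_zero : ∑ i, e i ≠ 0 := by
    intro h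
    simpa [h] using inner_sum_orthonormal he (Classical.arbitrary ι)
  have : Fact (Module.finrank ℝ (EuclideanSpace ℝ (Fin (d + 1))) = d + 1) :=
    ⟨finrank_euclideanSpace_fin⟩
  let φ := (OrthonormalBasis.fromOrthogonalSpanSingleton (𝕜 := ℝ) d sum_ne_zero).repr
  have mem_orthogonal (i : ι) : centered e i ∈ (Submodule.span ℝ {∑ i, e i})ᗮ :=
    Submodule.mem_orthogonal_singleton_iff_inner_right.2 (inner_sum_centered he i)
  exact ⟨_, isSimplexETFOn_univ_of_inner_eq hι (w := fun i => φ ⟨centered e i, mem_orthogonal i⟩)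
    fun i j => (φ.inner_map_map _ _).trans (inner_centered_centered he i j)⟩

lemma exists_isSimplexETF {N d : ℕ} (hN : 2 ≤ N) (hNd : N ≤ d + 1) :
    ∃ z : Fin N → EuclideanSpace ℝ (Fin d), IsSimplexETF z := by
  obtain ⟨z, hz⟩ := exists_isSimplexETFOn_univ (ι := Fin N) (d := d) (by simpa) (by simpa)
  exact ⟨z, isSimplexETFOn_univ_iff.1 hz⟩

lemma exists_forall_isSimplexETFOn {κ : Type*} [Nonempty κ] {d : ℕ} {batches : κ → Finset ι}
    (hdisj : Pairwise (Function.onFun Disjoint batches)) (two_le : ∀ k, 2 ≤ #(batches k))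
    (hd : ∀ k, #(batches k) ≤ d + 1) :
    ∃ u : ι → EuclideanSpace ℝ (Fin d),
      (∀ i, ‖u i‖ = 1) ∧ ∀ k, IsSimplexETFOn (batches k) u := by
  choose w hw using fun k => exists_isSimplexETFOn_univ (ι := batches k) (d := d)
    (by simpa using two_le k) (by simpa using hd k)
  let point : (Σ k, batches k) → ι := fun x => x.2
  have point_injective : Function.Injective point := by
    rintro ⟨k, i, hi⟩ ⟨l, _, hj⟩ rfl
    obtain rfl : k = l := by
      by_contra hkl
      exact disjoint_left.1 (hdisj hkl) hi hj
    rfl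
  have : Nonempty (Σ k, batches k) := by
    obtain ⟨i, hi⟩ := card_pos.1 (two_pos.trans_le (two_le (Classical.arbitrary κ)))
    exact ⟨⟨_, i, hi⟩⟩
  let u : ι → EuclideanSpace ℝ (Fin d) := fun i =>
    w (Function.invFun point i).1 (Function.invFun point i).2
  have u_coe (k : κ) (i : batches k) : u i = w k i := by
    simp only [u]
    rw [show Function.invFun point (i : ι) = ⟨k, i⟩ from
      Function.leftInverse_invFun point_injective ⟨k, i⟩]
  refine ⟨u, fun i => (hw _).1 _ (mem_univ _), fun k => isSimplexETFOn_univ_coe_iff.1 ?_⟩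
  simpa only [u_coe] using hw k

end Construction

theorem partition_minimizer_differs_from_full_general {N d : ℕ} {κ : Type*} [Fintype κ]
    (hNd : N ≤ d + 1) (batches : κ → Finset (Fin N)) (two_le : ∀ k, 2 ≤ #(batches k))
    (hdisj : Pairwise (Function.onFun Disjoint batches)) (hproper : ∃ k, #(batches k) < N) :
    ∃ u v : Fin N → EuclideanSpace ℝ (Fin d),
      (∀ i, ‖u i‖ = 1) ∧ (∀ i, ‖v i‖ = 1) ∧
      (∀ u' v' : Fin N → EuclideanSpace ℝ (Fin d),
        (∀ i, ‖u' i‖ = 1) → (∀ i, ‖v' i‖ = 1) →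
        ∑ k, batchLoss (batches k) u v ≤ ∑ k, batchLoss (batches k) u' v') ∧
      ¬ (∀ u' v' : Fin N → EuclideanSpace ℝ (Fin d),
        (∀ i, ‖u' i‖ = 1) → (∀ i, ‖v' i‖ = 1) →
        fullLoss u v ≤ fullLoss u' v') ∧
      (∀ k, ∀ i ∈ batches k, ∀ j ∈ batches k, i ≠ j →
        ⟪u i, u j⟫ = -(1 / ((#(batches k) : ℝ) - 1))) ∧
      ¬ IsSimplexETF u := by
  obtain ⟨k₀, hk₀⟩ := hproper
  have : Nonempty κ := ⟨k₀⟩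
  have two_le_N : 2 ≤ N := (two_le k₀).trans hk₀.le
  obtain ⟨u, hu, hETF⟩ := exists_forall_isSimplexETFOn hdisj two_le
    fun k => (card_finset_fin_le (batches k)).trans hNd
  obtain ⟨z, hz⟩ := exists_isSimplexETF two_le_N hNd
  have not_ETF : ¬ IsSimplexETF u := (hETF k₀).not_isSimplexETF (two_le k₀) hk₀
  refine ⟨u, u, hu, hu, fun u' v' hu' hv' => ?_, fun hmin => not_ETF ?_, fun k => (hETF k).2,
    not_ETF⟩
  · exact sum_le_sum fun k _ =>
      (hETF k).batchLoss_self_le (two_le k) (fun i _ => hu' i) fun i _ => hv' i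
  · exact hz.of_fullLoss_self_le two_le_N hu (hmin z z hz.1 hz.1)

/-- For a partition of `Fin N` into `N/B` disjoint mini-batches of size `B`
(`2 ≤ B < N ≤ d + 1`, `B ∣ N`), there is a unit-norm minimizer of the partition
mini-batch loss which is not a minimizer of the full-batch loss: its restriction
to each batch forms a simplex ETF of `B` points while the whole family does not
form a simplex ETF of `N` points. -/
theorem partition_minimizer_differs_from_full (N B d : ℕ) (hB : 2 ≤ B) (hBN : B < N)
    (hNd : N ≤ d + 1) (hdvd : B ∣ N)
    (batches : Fin (N / B) → Finset (Fin N))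
    (hcard : ∀ k, (batches k).card = B)
    (hdisj : ∀ k l, k ≠ l → Disjoint (batches k) (batches l))
    (hcover : (Finset.univ : Finset (Fin (N / B))).biUnion batches = Finset.univ) :
    ∃ u v : Fin N → EuclideanSpace ℝ (Fin d),
      (∀ i, ‖u i‖ = 1) ∧ (∀ i, ‖v i‖ = 1) ∧
      (∀ u' v' : Fin N → EuclideanSpace ℝ (Fin d),
        (∀ i, ‖u' i‖ = 1) → (∀ i, ‖v' i‖ = 1) →
        ∑ k, batchLoss (batches k) u v ≤ ∑ k, batchLoss (batches k) u' v') ∧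
      ¬ (∀ u' v' : Fin N → EuclideanSpace ℝ (Fin d),
        (∀ i, ‖u' i‖ = 1) → (∀ i, ‖v' i‖ = 1) →
        fullLoss u v ≤ fullLoss u' v') ∧
      (∀ k, ∀ i ∈ batches k, ∀ j ∈ batches k, i ≠ j →
        ⟪u i, u j⟫ = -(1/((B:ℝ) - 1))) ∧
      ¬ IsSimplexETF u := by
  simpa only [hcard] using partition_minimizer_differs_from_full_general hNd batches
    (by simpa only [hcard] using fun _ => hB) (fun k l => hdisj k l)
    ⟨⟨0, Nat.div_pos hBN.le (by lia)⟩, by rwa [hcard]⟩
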